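/- Let F be a field and let L be a field extension of F. Let f be a monic irreducible polynomial in F[X], and let g be a monic irreducible polynomial in L[X] that divides the image of f under the inclusion map F[X] → L[X]. Let r be the multiplicity of g as an irreducible factor of the image of f (the largest integer r such that g^r divides the image of f in L[X]). Then r = 1 if F has characteristic 0, and r is a power of p if F has characteristic p > 0. -/

import Mathlib

open Polynomial

theorem rootMult_pow_aux {F K : Type*} [Field F] [Field K] (i : F →+* K) (q : ℕ) [hq : ExpChar F q]
    {f : F[X]} (hf : Irreducible f) {x : K} (hx : (f.map i).IsRoot x) :
    ∃ n : ℕ, (f.map i).rootMultiplicity x = q ^ n := by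
  obtain ⟨h, hs, n, hn⟩ := hf.hasSeparableContraction q
  haveI : ExpChar K q := expChar_of_injective_ringHom i.injective q
  have e : f.map i = expand K (q ^ n) (h.map i) := by rw [← hn, map_expand]
  have h0 : f.map i ≠ 0 := Polynomial.map_ne_zero hf.ne_zero
  have hpos : 0 < (f.map i).rootMultiplicity x := (rootMultiplicity_pos h0).2 hx
  refine ⟨n, ?_⟩
  have e2 : (f.map i).rootMultiplicity x = q ^ n * (h.map i).rootMultiplicity (x ^ q ^ n) := by
    rw [e, rootMultiplicity_expand_pow]
  have h1 := rootMultiplicity_le_one_of_separable (hs.map (f := i)) (x ^ q ^ n)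
  have h2 : (h.map i).rootMultiplicity (x ^ q ^ n) = 1 := by
    rcases Nat.le_one_iff_eq_zero_or_eq_one.1 h1 with h | h
    · rw [e2, h] at hpos; simp at hpos
    · exact h
  rw [e2, h2, mul_one]

theorem mult_aux (F L : Type*) [Field F] [Field L] [Algebra F L] (q : ℕ) [hq : ExpChar F q]
    (f : F[X]) (hfirr : Irreducible f)
    (g : L[X]) (hgirr : Irreducible g)
    (hdvd : g ∣ f.map (algebraMap F L))
    (r : ℕ) (hr : g ^ r ∣ f.map (algebraMap F L))
    (hrmax : ¬ g ^ (r + 1) ∣ f.map (algebraMap F L)) :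
    ∃ n m : ℕ, q ^ n = r * q ^ m := by
  let K := AlgebraicClosure L
  let j : L →+* K := algebraMap L K
  haveI : ExpChar L q := expChar_of_injective_ringHom (algebraMap F L).injective q
  obtain ⟨x, hx⟩ := IsAlgClosed.exists_root (g.map j)
    (by rw [degree_map]; exact (degree_pos_of_irreducible hgirr).ne')
  obtain ⟨h, hh⟩ := hr
  have hgh : ¬ g ∣ h := by
    rintro ⟨c, rfl⟩
    exact hrmax ⟨c, by rw [hh]; ring⟩
  have hcop : IsCoprime (g.map j) (h.map j) :=
    ((hgirr.coprime_iff_not_dvd).2 hgh).map (mapRingHom j)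
  have hhx : ¬ (h.map j).IsRoot x := by
    intro hx'
    obtain ⟨a, b, hab⟩ := hcop
    have := congrArg (eval x) hab
    simp only [eval_add, eval_mul, hx.eq_zero, hx'.eq_zero, mul_zero, add_zero, eval_one] at this
    exact zero_ne_one this
  have hmap : f.map (j.comp (algebraMap F L)) = (g.map j) ^ r * h.map j := by
    rw [← Polynomial.map_map, hh, Polynomial.map_mul, Polynomial.map_pow]
  have hfx : (f.map (j.comp (algebraMap F L))).IsRoot x := by
    rw [← Polynomial.map_map]
    exact hx.dvd (Polynomial.map_dvd j hdvd)
  obtain ⟨n, hn⟩ := rootMult_pow_aux (j.comp (algebraMap F L)) q hfirr hfx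
  obtain ⟨m, hm⟩ := rootMult_pow_aux j q hgirr hx
  refine ⟨n, m, ?_⟩
  have hne : (g.map j) ^ r * h.map j ≠ 0 := by
    rw [← hmap]; exact Polynomial.map_ne_zero hfirr.ne_zero
  classical
  rw [← hn, ← hm, hmap, rootMultiplicity_mul hne, rootMultiplicity_eq_zero hhx, add_zero,
    ← count_roots, ← count_roots, roots_pow, Multiset.count_nsmul]

/-- Let `F` be a field and `L` a field extension of `F`.  Let `f` be a monic
irreducible polynomial in `F[X]` and `g` a monic irreducible polynomial in `L[X]` dividing the
image of `f` in `L[X]`.  If `r` is the multiplicity of `g` as an irreducible factor of the image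
of `f` (i.e. the largest `r` with `g ^ r ∣ f.map (algebraMap F L)`), then `r = 1` if `F` has
characteristic `0`, and `r` is a power of `p` if `F` has characteristic `p > 0`. -/
theorem multiplicity_of_irreducible_factor_over_extension
    (F L : Type*) [Field F] [Field L] [Algebra F L]
    (f : F[X]) (hfm : f.Monic) (hfirr : Irreducible f)
    (g : L[X]) (hgm : g.Monic) (hgirr : Irreducible g)
    (hdvd : g ∣ f.map (algebraMap F L))
    (r : ℕ) (hr : g ^ r ∣ f.map (algebraMap F L))
    (hrmax : ¬ g ^ (r + 1) ∣ f.map (algebraMap F L)) :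
    (CharZero F → r = 1) ∧
      (∀ p : ℕ, 0 < p → CharP F p → ∃ k : ℕ, r = p ^ k) := by
  constructor
  · intro _
    obtain ⟨n, m, h⟩ := mult_aux F L 1 f hfirr g hgirr hdvd r hr hrmax
    simpa using h.symm
  · intro p hp _
    haveI : NeZero p := ⟨hp.ne'⟩
    have hpp : p.Prime := (CharP.char_is_prime_or_zero F p).resolve_right hp.ne'
    haveI : ExpChar F p := ExpChar.prime hpp
    obtain ⟨n, m, h⟩ := mult_aux F L p f hfirr g hgirr hdvd r hr hrmax
    obtain ⟨k, _, hk⟩ := (Nat.dvd_prime_pow hpp).1 (Dvd.intro _ h.symm)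
    exact ⟨k, hk⟩
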